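/- arXiv:1804.01785 — 7 statements merged into one kernel-verified Lean document; each statement's English description precedes it below -/
import Mathlib

section
/- Let V be a nonempty finite set and f : 2^V → ℝ a normalized submodular set function. If P is a decomposer of the game (V, f) (a partition of V with f(V) = ∑_{C∈P} f(C)), then for every block C ∈ P and every player i ∈ C, the i-th coordinate of the Shapley value of the game (V, f) equals the i-th coordinate of the Shapley value of the subgame (C, f), i.e. ∑_{D ⊆ V∖{i}} (|D|! (|V|−|D|−1)! / |V|!) (f(D ∪ {i}) − f(D)) = ∑_{D ⊆ C∖{i}} (|D|! (|C|−|D|−1)! / |C|!) (f(D ∪ {i}) − f(D)). -/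
open Finset

/-- The Shapley weight of a coalition of size `k` in a game with `n` players. -/
noncomputable def shapleyWeight (n k : ℕ) : ℝ :=
  (k.factorial * (n - k - 1).factorial : ℝ) / n.factorial

theorem shapleyWeight_succ_add {n k : ℕ} (h : k < n) :
    shapleyWeight (n + 1) k + shapleyWeight (n + 1) (k + 1) = shapleyWeight n k := by
  obtain ⟨m, rfl⟩ := Nat.exists_eq_add_of_lt h
  have h₁ : k + m + 1 + 1 - k - 1 = m + 1 := by omega
  have h₂ : k + m + 1 + 1 - (k + 1) - 1 = m := by omega
  have h₃ : k + m + 1 - k - 1 = m := by omega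
  have h₄ : ((k + m + 1).factorial : ℝ) ≠ 0 := by positivity
  have h₅ : (k + m + 1 + 1 : ℝ) ≠ 0 := by positivity
  simp only [shapleyWeight, h₁, h₂, h₃, Nat.factorial_succ (k + m + 1), Nat.factorial_succ m,
    Nat.factorial_succ k]
  push_cast
  field_simp
  ring

/-- Adding a player who does not affect the marginal contributions `g` leaves the
weighted sum unchanged. -/
theorem sum_shapleyWeight_insert {V : Type*} [DecidableEq V] (g : Finset V → ℝ)
    {B : Finset V} {j : V} (hj : j ∉ B) (hg : ∀ D, g (insert j D) = g D) :
    ∑ D ∈ (insert j B).powerset, shapleyWeight ((insert j B).card + 1) D.card * g D =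
      ∑ D ∈ B.powerset, shapleyWeight (B.card + 1) D.card * g D := by
  rw [Finset.sum_powerset_insert hj, ← Finset.sum_add_distrib, Finset.card_insert_of_notMem hj]
  refine Finset.sum_congr rfl fun D hD => ?_
  have hDB := Finset.mem_powerset.1 hD
  rw [Finset.card_insert_of_notMem fun h => hj (hDB h), hg, ← add_mul,
    shapleyWeight_succ_add (Nat.lt_succ_of_le (Finset.card_le_card hDB))]

theorem sum_shapleyWeight_union {V : Type*} [DecidableEq V] (g : Finset V → ℝ)
    (A S : Finset V) (hAS : Disjoint A S) (hg : ∀ j ∈ S, ∀ D, g (insert j D) = g D) :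
    ∑ D ∈ (A ∪ S).powerset, shapleyWeight ((A ∪ S).card + 1) D.card * g D =
      ∑ D ∈ A.powerset, shapleyWeight (A.card + 1) D.card * g D := by
  induction S using Finset.induction_on with
  | empty => simp
  | insert j S hj ih =>
    rw [Finset.disjoint_insert_right] at hAS
    rw [Finset.union_insert, sum_shapleyWeight_insert g (by simp [hAS.1, hj])
      (hg j (Finset.mem_insert_self j S))]
    exact ih hAS.2 fun k hk => hg k (Finset.mem_insert_of_mem hk)

theorem apply_sup_le_sum_of_submodular {V : Type*} [DecidableEq V] {f : Finset V → ℝ}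
    (hnorm : f ∅ = 0) (hsub : ∀ X Y : Finset V, f (X ∩ Y) + f (X ∪ Y) ≤ f X + f Y)
    (Q : Finset (Finset V)) (hdisj : ∀ C ∈ Q, ∀ D ∈ Q, C ≠ D → Disjoint C D) :
    f (Q.sup id) ≤ ∑ C ∈ Q, f C := by
  induction Q using Finset.induction_on with
  | empty => simp [hnorm]
  | insert C Q hC ih =>
    have hCQ : Disjoint C (Q.sup id) := Finset.disjoint_sup_right.2 fun D hD =>
      hdisj C (by simp) D (by simp [hD]) fun h => hC (h ▸ hD)
    have h := hsub C (Q.sup id)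
    rw [Finset.disjoint_iff_inter_eq_empty.1 hCQ, hnorm] at h
    have := ih fun C hC D hD => hdisj C (by simp [hC]) D (by simp [hD])
    rw [Finset.sup_insert, Finset.sum_insert hC, id, Finset.sup_eq_union]
    linarith

/-- If a submodular function splits over `C` and its complement, it splits on every set. -/
theorem apply_eq_inter_add_sdiff_of_submodular {V : Type*} [Fintype V] [DecidableEq V]
    {f : Finset V → ℝ} (hnorm : f ∅ = 0)
    (hsub : ∀ X Y : Finset V, f (X ∩ Y) + f (X ∪ Y) ≤ f X + f Y)
    {C : Finset V} (hC : f C + f Cᶜ ≤ f Finset.univ) (D : Finset V) :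
    f D = f (D ∩ C) + f (D \ C) := by
  have h₁ := hsub D C
  have h₂ := hsub (D ∪ C) Cᶜ
  have h₃ := hsub (D ∩ C) (D \ C)
  have e₁ : (D ∪ C) ∩ Cᶜ = D \ C := by ext; simp; tauto
  have e₂ : D ∪ C ∪ Cᶜ = Finset.univ := by ext; simp
  have e₃ : (D ∩ C) ∩ (D \ C) = ∅ := by ext; simp
  have e₄ : (D ∩ C) ∪ (D \ C) = D := by ext; simp; tauto
  rw [e₁, e₂] at h₂
  rw [e₃, e₄, hnorm] at h₃
  linarith

/-- Decomposition of the Shapley value: for a normalized submodular game `(V, f)`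
with decomposer `P` (a partition of `V` with `f(V) = ∑_{C ∈ P} f(C)`), the Shapley
value coordinate of each player `i` in a block `C` computed in the whole game equals
the one computed in the subgame on `C`. -/
theorem shapley_decomposition
    {V : Type*} [Fintype V] [DecidableEq V] [Nonempty V]
    (f : Finset V → ℝ)
    (hnorm : f ∅ = 0)
    (hsub : ∀ X Y : Finset V, f (X ∩ Y) + f (X ∪ Y) ≤ f X + f Y)
    (P : Finset (Finset V))
    (hne : ∀ C ∈ P, C.Nonempty)
    (hdisj : ∀ C ∈ P, ∀ D ∈ P, C ≠ D → Disjoint C D)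
    (hcover : P.sup id = Finset.univ)
    (hdec : f Finset.univ = ∑ C ∈ P, f C) :
    ∀ C ∈ P, ∀ i ∈ C,
      ∑ D ∈ (Finset.univ.erase i).powerset,
        ((D.card.factorial * (Fintype.card V - D.card - 1).factorial : ℝ) /
            (Fintype.card V).factorial) * (f (insert i D) - f D)
      = ∑ D ∈ (C.erase i).powerset,
          ((D.card.factorial * (C.card - D.card - 1).factorial : ℝ) /
              C.card.factorial) * (f (insert i D) - f D) := by
  intro C hC i hi
  have hsplit : f C + f Cᶜ ≤ f Finset.univ := by
    have hdisjC : Disjoint C ((P.erase C).sup id) := Finset.disjoint_sup_right.2 fun D hD =>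
      hdisj C hC D (Finset.mem_of_mem_erase hD) (Finset.ne_of_mem_erase hD).symm
    have hunion : C ∪ (P.erase C).sup id = Finset.univ := by
      rw [← hcover, ← Finset.insert_erase hC, Finset.sup_insert, Finset.erase_insert (by simp)]
      rfl
    have hcompl : Cᶜ = (P.erase C).sup id :=
      IsCompl.compl_eq ⟨hdisjC, codisjoint_iff.2 hunion⟩
    have hle := apply_sup_le_sum_of_submodular hnorm hsub (P.erase C) fun A hA B hB =>
      hdisj A (Finset.mem_of_mem_erase hA) B (Finset.mem_of_mem_erase hB)
    rw [hdec, ← Finset.add_sum_erase P f hC, hcompl]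
    linarith
  have hmarginal : ∀ D, f (insert i D) - f D = f (insert i (D ∩ C)) - f (D ∩ C) := fun D => by
    rw [apply_eq_inter_add_sdiff_of_submodular hnorm hsub hsplit (insert i D),
      apply_eq_inter_add_sdiff_of_submodular hnorm hsub hsplit D,
      Finset.insert_inter_of_mem hi, Finset.insert_sdiff_of_mem _ hi]
    ring
  have hcover' : C.erase i ∪ Cᶜ = Finset.univ.erase i := by
    ext j
    by_cases hj : j = i <;> simp [hj, hi, em]
  have key := sum_shapleyWeight_union (fun D => f (insert i D) - f D) (C.erase i) Cᶜ
    (disjoint_compl_right.mono_left (Finset.erase_subset i C)) fun j hj D => by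
      rw [hmarginal, hmarginal D, Finset.insert_inter_of_notMem (Finset.mem_compl.1 hj)]
  rwa [hcover', Finset.card_erase_add_one hi, Finset.card_erase_add_one (Finset.mem_univ i),
    Finset.card_univ] at key
end

section
/- Let V be a nonempty finite set, f : 2^V → ℝ a normalized monotone submodular set function, and P a decomposer of the game (V, f) (a partition of V with f(V) = ∑_{C∈P} f(C)). Then a vector r ∈ ℝ^V belongs to the core B(f) = { r : r(X) ≤ f(X) for all X ⊆ V, r(V) = f(V) } if and only if for every block C ∈ P the restriction of r to C satisfies r(Y) ≤ f(Y) for all Y ⊆ C and r(C) = f(C); that is, B(f) is the direct sum ⊕_{C∈P} B(f|_C) of the cores of the subgames. -/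
open Finset

/-- A monotone submodular function satisfies an iterated submodular inequality along any
finite family of sets. -/
theorem sum_inter_add_union_sup_le {V : Type*} [DecidableEq V] (f : Finset V → ℝ)
    (hmono : ∀ X Y : Finset V, Y ⊆ X → f Y ≤ f X)
    (hsub : ∀ X Y : Finset V, f (X ∩ Y) + f (X ∪ Y) ≤ f X + f Y)
    (X : Finset V) (Q : Finset (Finset V)) :
    ∑ C ∈ Q, f (X ∩ C) + f (X ∪ Q.sup id) ≤ f X + ∑ C ∈ Q, f C := by
  induction Q using Finset.induction_on with
  | empty => simp
  | insert D Q hD ih =>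
    rw [sum_insert hD, sum_insert hD, sup_insert]
    have hunion : X ∪ (id D ⊔ Q.sup id) = (X ∪ Q.sup id) ∪ D := by
      rw [sup_eq_union, id, union_comm D, union_assoc]
    rw [hunion]
    have hD_sub := hsub (X ∪ Q.sup id) D
    have hD_mono := hmono ((X ∪ Q.sup id) ∩ D) (X ∩ D)
      (inter_subset_inter_right subset_union_left)
    linarith

/-- A sum over `X` splits along a family of pairwise disjoint sets covering the whole type. -/
theorem sum_eq_sum_sum_inter_of_cover {V M : Type*} [Fintype V] [DecidableEq V]
    [AddCommMonoid M] (P : Finset (Finset V))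
    (hdisj : ∀ C ∈ P, ∀ D ∈ P, C ≠ D → Disjoint C D)
    (hcover : P.sup id = Finset.univ) (r : V → M) (X : Finset V) :
    ∑ i ∈ X, r i = ∑ C ∈ P, ∑ i ∈ X ∩ C, r i := by
  rw [← sum_biUnion fun C hC D hD hCD =>
    (hdisj C hC D hD hCD).mono inter_subset_right inter_subset_right]
  congr 1
  rw [sup_eq_biUnion] at hcover
  have h := inter_biUnion X P id
  rw [hcover, inter_univ] at h
  exact h

/-- Decomposition of the core: for a normalized monotone submodular game `(V, f)`
with decomposer `P`, a vector `r` lies in the core `B(f)` iff, for every block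
`C ∈ P`, the restriction of `r` to `C` lies in the core of the subgame `(C, f)`. -/
theorem core_decomposition
    {V : Type*} [Fintype V] [DecidableEq V] [Nonempty V]
    (f : Finset V → ℝ)
    (hnorm : f ∅ = 0)
    (hmono : ∀ X Y : Finset V, Y ⊆ X → f Y ≤ f X)
    (hsub : ∀ X Y : Finset V, f (X ∩ Y) + f (X ∪ Y) ≤ f X + f Y)
    (P : Finset (Finset V))
    (hne : ∀ C ∈ P, C.Nonempty)
    (hdisj : ∀ C ∈ P, ∀ D ∈ P, C ≠ D → Disjoint C D)
    (hcover : P.sup id = Finset.univ)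
    (hdec : f Finset.univ = ∑ C ∈ P, f C) :
    ∀ r : V → ℝ,
      ((∀ X : Finset V, ∑ i ∈ X, r i ≤ f X) ∧ ∑ i, r i = f Finset.univ)
      ↔ (∀ C ∈ P, (∀ Y ⊆ C, ∑ i ∈ Y, r i ≤ f Y) ∧ ∑ i ∈ C, r i = f C) := by
  intro r
  have hsplit := sum_eq_sum_sum_inter_of_cover P hdisj hcover r
  constructor
  · rintro ⟨hle, htot⟩
    have hblocks : ∑ C ∈ P, ∑ i ∈ C, r i = ∑ C ∈ P, f C := by
      rw [← hdec, ← htot, hsplit univ]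
      simp only [univ_inter]
    have heq := (sum_eq_sum_iff_of_le fun C _ => hle C).mp hblocks
    exact fun C hC => ⟨fun Y _ => hle Y, heq C hC⟩
  · intro h
    constructor
    · intro X
      have hsum : ∑ C ∈ P, ∑ i ∈ X ∩ C, r i ≤ ∑ C ∈ P, f (X ∩ C) :=
        sum_le_sum fun C hC => (h C hC).1 _ inter_subset_right
      have hkey := sum_inter_add_union_sup_le f hmono hsub X P
      rw [hcover, union_eq_right.mpr (subset_univ X), hdec] at hkey
      rw [hsplit X]
      linarith
    · rw [hsplit univ, hdec]
      exact sum_congr rfl fun C hC => by rw [univ_inter, (h C hC).2]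
end

section
/- Let V be a nonempty finite set and f : 2^V → ℝ a normalized submodular set function. Then the core B(f) = { r ∈ ℝ^V : r(X) ≤ f(X) for all X ⊆ V, r(V) = f(V) } is nonempty. -/
open Finset

/-- Greedy construction: the restriction of a normalized submodular function to the subsets of any
finite set `S` has a core vector. -/
theorem exists_core_vector_on {V : Type*} [DecidableEq V] (f : Finset V → ℝ) (hnorm : f ∅ = 0)
    (hsub : ∀ X Y : Finset V, f (X ∩ Y) + f (X ∪ Y) ≤ f X + f Y) (S : Finset V) :
    ∃ r : V → ℝ, (∀ X ⊆ S, ∑ i ∈ X, r i ≤ f X) ∧ ∑ i ∈ S, r i = f S := by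
  induction S using Finset.induction_on with
  | empty =>
    refine ⟨0, fun X hX => ?_, by simp [hnorm]⟩
    simp [subset_empty.mp hX, hnorm]
  | insert a S ha ih =>
    obtain ⟨r, hle, heq⟩ := ih
    have hsum (c : ℝ) (Y : Finset V) (hY : a ∉ Y) :
        ∑ i ∈ Y, Function.update r a c i = ∑ i ∈ Y, r i :=
      sum_update_of_notMem hY r c
    refine ⟨Function.update r a (f (insert a S) - f S), fun X hX => ?_, ?_⟩
    · by_cases haX : a ∈ X
      · have hYS : X.erase a ⊆ S := subset_insert_iff.mp hX
        have hinter : X ∩ S = X.erase a := by grind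
        have hunion : X ∪ S = insert a S := by grind
        have hXS := hsub X S
        rw [hinter, hunion] at hXS
        rw [← add_sum_erase X _ haX, hsum _ _ (notMem_erase a X), Function.update_self]
        linarith [hle _ hYS]
      · rw [hsum _ _ haX]
        exact hle X ((subset_insert_iff_of_notMem haX).mp hX)
    · rw [sum_insert ha, hsum _ _ ha, Function.update_self, heq]
      ring

/-- The core (base polyhedron) of a normalized submodular set function is nonempty. -/
theorem core_nonempty
    {V : Type*} [Fintype V] [DecidableEq V] [Nonempty V]
    (f : Finset V → ℝ)
    (hnorm : f ∅ = 0)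
    (hsub : ∀ X Y : Finset V, f (X ∩ Y) + f (X ∪ Y) ≤ f X + f Y) :
    ∃ r : V → ℝ,
      (∀ X : Finset V, ∑ i ∈ X, r i ≤ f X) ∧ ∑ i, r i = f Finset.univ := by
  obtain ⟨r, hle, heq⟩ := exists_core_vector_on f hnorm hsub univ
  exact ⟨r, fun X => hle X (subset_univ X), heq⟩
end

section
/- Let V be a nonempty finite set of cardinality n, f : 2^V → ℝ a normalized submodular set function, and (φ_1, …, φ_n) an enumeration (permutation) of the elements of V. Define the greedy vector r ∈ ℝ^V by r_{φ_i} = f({φ_1, …, φ_i}) − f({φ_1, …, φ_{i−1}}) for each i (with r_{φ_1} = f({φ_1})). Then r lies in the core B(f), i.e. r(X) ≤ f(X) for all X ⊆ V and r(V) = f(V). -/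
open Finset

/-- Edmonds' greedy algorithm: for a normalized submodular `f` and an enumeration
`σ : V ≃ Fin n` of the players, the greedy vector
`r i = f({j : σ j ≤ σ i}) − f({j : σ j < σ i})` lies in the core `B(f)`. -/
theorem greedy_in_core
    {V : Type*} [Fintype V] [DecidableEq V] [Nonempty V]
    (f : Finset V → ℝ)
    (hnorm : f ∅ = 0)
    (hsub : ∀ X Y : Finset V, f (X ∩ Y) + f (X ∪ Y) ≤ f X + f Y)
    (σ : V ≃ Fin (Fintype.card V)) (r : V → ℝ)
    (hr : ∀ i : V,
      r i = f (Finset.univ.filter fun j => σ j ≤ σ i)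
            - f (Finset.univ.filter fun j => σ j < σ i)) :
    (∀ X : Finset V, ∑ i ∈ X, r i ≤ f X) ∧ ∑ i, r i = f Finset.univ := by
  refine ⟨fun X => ?_, ?_⟩
  · induction X using Finset.induction_on_max_value σ with
    | empty => simp [hnorm]
    | insert a s ha hmax ih =>
      have hlt : ∀ x ∈ s, σ x < σ a := fun x hx =>
        lt_of_le_of_ne (hmax x hx) fun h => ha (σ.injective h ▸ hx)
      have hinter : insert a s ∩ (Finset.univ.filter fun j => σ j < σ a) = s := by
        ext x
        simp only [Finset.mem_inter, Finset.mem_insert, Finset.mem_filter, Finset.mem_univ,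
          true_and]
        exact ⟨fun ⟨h, hx⟩ => h.resolve_left fun he => (he ▸ hx).false,
          fun hx => ⟨Or.inr hx, hlt x hx⟩⟩
      have hunion : insert a s ∪ (Finset.univ.filter fun j => σ j < σ a)
          = Finset.univ.filter fun j => σ j ≤ σ a := by
        ext x
        simp only [Finset.mem_union, Finset.mem_insert, Finset.mem_filter, Finset.mem_univ,
          true_and, le_iff_lt_or_eq, σ.injective.eq_iff]
        have := hlt x
        tauto
      have hsubmod := hsub (insert a s) (Finset.univ.filter fun j => σ j < σ a)
      rw [hinter, hunion] at hsubmod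
      rw [Finset.sum_insert ha, hr a]
      linarith
  · let g : ℕ → ℝ := fun k => f (Finset.univ.filter fun j => (σ j : ℕ) < k)
    have hrg : ∀ i, r i = g (σ i + 1) - g (σ i) := fun i => by
      simp only [hr, g, Fin.le_def, Fin.lt_def, Nat.lt_succ_iff]
    calc ∑ i, r i = ∑ i, (g (σ i + 1) - g (σ i)) := Finset.sum_congr rfl fun i _ => hrg i
      _ = ∑ k : Fin (Fintype.card V), (g (k + 1) - g k) :=
        σ.sum_comp fun k => g (k + 1) - g k
      _ = ∑ k ∈ Finset.range (Fintype.card V), (g (k + 1) - g k) :=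
        Fin.sum_univ_eq_sum_range (fun k => g (k + 1) - g k) _
      _ = g (Fintype.card V) - g 0 := Finset.sum_range_sub g _
      _ = f Finset.univ := by simp [g, hnorm]
end

section
/- Let V be a nonempty finite set of cardinality n, f : 2^V → ℝ a normalized submodular set function, and (φ_1, …, φ_n) an enumeration (permutation) of the elements of V. Then the greedy vector r ∈ ℝ^V defined by r_{φ_i} = f({φ_1, …, φ_i}) − f({φ_1, …, φ_{i−1}}) is an extreme point of the core B(f). -/
open Finset

section InitialSegment

variable {V : Type*} {n : ℕ}

/-- Induction up to `n` along an enumeration `σ : V ≃ Fin n`. -/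
lemma Equiv.nat_le_induction (σ : V ≃ Fin n) {p : ℕ → Prop} (zero : p 0)
    (succ : ∀ i : V, p (σ i) → p (σ i + 1)) {k : ℕ} (hk : k ≤ n) : p k := by
  induction k with
  | zero => exact zero
  | succ k ih => simpa using succ (σ.symm ⟨k, hk⟩) (by simpa using ih (by lia))

variable [Fintype V]

/-- The first `k` elements in the enumeration `σ`. -/
def initialSegment (σ : V ≃ Fin n) (k : ℕ) : Finset V :=
  univ.filter fun j => (σ j : ℕ) < k

@[simp]
lemma mem_initialSegment {σ : V ≃ Fin n} {k : ℕ} {j : V} :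
    j ∈ initialSegment σ k ↔ (σ j : ℕ) < k := by
  simp [initialSegment]

@[simp]
lemma initialSegment_zero (σ : V ≃ Fin n) : initialSegment σ 0 = ∅ := by
  ext; simp

lemma initialSegment_eq_univ (σ : V ≃ Fin n) : initialSegment σ n = univ := by
  ext; simp

lemma initialSegment_apply (σ : V ≃ Fin n) (i : V) :
    initialSegment σ (σ i) = univ.filter fun j => σ j < σ i := by
  ext; simp

lemma initialSegment_apply_succ (σ : V ≃ Fin n) (i : V) :
    initialSegment σ (σ i + 1) = univ.filter fun j => σ j ≤ σ i := by
  ext j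
  rw [mem_initialSegment, mem_filter_univ, Fin.le_def, Nat.lt_succ_iff]

variable [DecidableEq V]

lemma initialSegment_succ_eq_insert (σ : V ≃ Fin n) (i : V) :
    initialSegment σ (σ i + 1) = insert i (initialSegment σ (σ i)) := by
  ext j
  rw [mem_insert, mem_initialSegment, mem_initialSegment, Nat.lt_succ_iff_lt_or_eq,
    ← Fin.ext_iff, σ.injective.eq_iff, or_comm]

lemma sum_initialSegment_succ (σ : V ≃ Fin n) (s : V → ℝ) (i : V) :
    ∑ j ∈ initialSegment σ (σ i + 1), s j = s i + ∑ j ∈ initialSegment σ (σ i), s j := by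
  rw [initialSegment_succ_eq_insert, sum_insert (by simp)]

variable {f : Finset V → ℝ} {σ : V ≃ Fin n} {r : V → ℝ}

/-- The greedy vector is tight on every initial segment. -/
lemma greedy_sum_initialSegment (hnorm : f ∅ = 0)
    (hr : ∀ i, r i = f (initialSegment σ (σ i + 1)) - f (initialSegment σ (σ i)))
    {k : ℕ} (hk : k ≤ n) : ∑ i ∈ initialSegment σ k, r i = f (initialSegment σ k) := by
  refine Equiv.nat_le_induction σ
    (p := fun k => ∑ i ∈ initialSegment σ k, r i = f (initialSegment σ k))
    (by simp [hnorm]) (fun i ih => ?_) hk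
  rw [sum_initialSegment_succ, ih, hr]
  ring

/-- The greedy vector satisfies all the inequalities defining the core. -/
lemma greedy_sum_le (hnorm : f ∅ = 0)
    (hsub : ∀ X Y : Finset V, f (X ∩ Y) + f (X ∪ Y) ≤ f X + f Y)
    (hr : ∀ i, r i = f (initialSegment σ (σ i + 1)) - f (initialSegment σ (σ i)))
    (X : Finset V) : ∑ i ∈ X, r i ≤ f X := by
  suffices h : ∑ i ∈ X ∩ initialSegment σ n, r i ≤ f (X ∩ initialSegment σ n) by
    simpa [initialSegment_eq_univ] using h
  refine Equiv.nat_le_induction σ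
    (p := fun k => ∑ i ∈ X ∩ initialSegment σ k, r i ≤ f (X ∩ initialSegment σ k))
    (by simp [hnorm]) (fun i ih => ?_) le_rfl
  by_cases hi : i ∈ X
  · have h := hsub (X ∩ initialSegment σ (σ i + 1)) (initialSegment σ (σ i))
    have hinter : X ∩ initialSegment σ (σ i + 1) ∩ initialSegment σ (σ i) =
        X ∩ initialSegment σ (σ i) := by
      ext; simp; lia
    have hunion : X ∩ initialSegment σ (σ i + 1) ∪ initialSegment σ (σ i) =
        initialSegment σ (σ i + 1) := by
      rw [initialSegment_succ_eq_insert, inter_insert_of_mem hi, insert_union,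
        union_eq_right.2 inter_subset_right]
    have hsum : ∑ j ∈ X ∩ initialSegment σ (σ i + 1), r j =
        r i + ∑ j ∈ X ∩ initialSegment σ (σ i), r j := by
      rw [initialSegment_succ_eq_insert, inter_insert_of_mem hi, sum_insert (by simp)]
    rw [hinter, hunion] at h
    rw [hsum, hr]
    linarith
  · rwa [initialSegment_succ_eq_insert, inter_insert_of_notMem hi]

/-- A vector is determined by its sums over initial segments. -/
lemma eq_of_sum_initialSegment_eq (σ : V ≃ Fin n) {s t : V → ℝ}
    (h : ∀ k ≤ n, ∑ i ∈ initialSegment σ k, s i = ∑ i ∈ initialSegment σ k, t i) : s = t := by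
  funext i
  have hsucc := h (σ i + 1) (σ i).isLt
  rw [sum_initialSegment_succ, sum_initialSegment_succ, h (σ i) (σ i).isLt.le] at hsucc
  exact add_right_cancel hsucc

end InitialSegment

/-- The greedy vector associated with an enumeration `σ : V ≃ Fin n` of the players
is an extreme point of the core `B(f)` of a normalized submodular function `f`. -/
theorem greedy_extreme_point
    {V : Type*} [Fintype V] [DecidableEq V] [Nonempty V]
    (f : Finset V → ℝ)
    (hnorm : f ∅ = 0)
    (hsub : ∀ X Y : Finset V, f (X ∩ Y) + f (X ∪ Y) ≤ f X + f Y)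
    (σ : V ≃ Fin (Fintype.card V)) (r : V → ℝ)
    (hr : ∀ i : V,
      r i = f (Finset.univ.filter fun j => σ j ≤ σ i)
            - f (Finset.univ.filter fun j => σ j < σ i)) :
    r ∈ Set.extremePoints ℝ
      {s : V → ℝ |
        (∀ X : Finset V, ∑ i ∈ X, s i ≤ f X) ∧ ∑ i, s i = f Finset.univ} := by
  simp only [← initialSegment_apply, ← initialSegment_apply_succ] at hr
  have htight : ∀ k ≤ Fintype.card V,
      ∑ i ∈ initialSegment σ k, r i = f (initialSegment σ k) :=
    fun k hk => greedy_sum_initialSegment hnorm hr hk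
  refine ⟨⟨greedy_sum_le hnorm hsub hr, ?_⟩, ?_⟩
  · simpa [initialSegment_eq_univ] using htight _ le_rfl
  · rintro x ⟨hx, -⟩ y ⟨hy, -⟩ ⟨a, b, ha, hb, hab, hxy⟩
    refine eq_of_sum_initialSegment_eq σ fun k hk => ?_
    have hcomb : a * ∑ i ∈ initialSegment σ k, x i + b * ∑ i ∈ initialSegment σ k, y i =
        ∑ i ∈ initialSegment σ k, r i := by
      simp [← hxy, sum_add_distrib, mul_sum]
    rw [htight k hk] at hcomb ⊢
    refine le_antisymm (hx _) (le_of_mul_le_mul_left ?_ ha)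
    have hby := mul_le_mul_of_nonneg_left (hy (initialSegment σ k)) hb.le
    have hf : a * f (initialSegment σ k) + b * f (initialSegment σ k) =
        f (initialSegment σ k) := by
      rw [← add_mul, hab, one_mul]
    linarith
end

section
/- Let V be a nonempty finite set and f : 2^V → ℝ a normalized submodular set function. Then the Shapley value φ ∈ ℝ^V, defined by φ_i = ∑_{C ⊆ V∖{i}} (|C|! (|V|−|C|−1)! / |V|!) (f(C ∪ {i}) − f(C)), lies in the core B(f), i.e. φ(X) ≤ f(X) for all X ⊆ V and φ(V) = f(V). -/
open Finset

lemma shapleyWeight_nonneg (n k : ℕ) : 0 ≤ shapleyWeight n k := by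
  unfold shapleyWeight
  positivity

/-- The coefficient of `g D` in the sum of all Shapley values, for `k = |D|`. -/
lemma mul_shapleyWeight_pred_sub (n k : ℕ) (hk : k ≤ n) :
    (k : ℝ) * shapleyWeight n (k - 1) - ((n - k : ℕ) : ℝ) * shapleyWeight n k =
      (if k = n then 1 else 0) - (if k = 0 then 1 else 0) := by
  have hn : (n.factorial : ℝ) ≠ 0 := by positivity
  have gain : (k : ℝ) * shapleyWeight n (k - 1) =
      if k = 0 then 0 else (k.factorial * (n - k).factorial : ℝ) / n.factorial := by
    rcases k with _ | k
    · simp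
    · have h : n - k - 1 = n - (k + 1) := by omega
      simp only [shapleyWeight, Nat.add_sub_cancel, h, Nat.factorial_succ k, Nat.succ_ne_zero,
        if_false]
      push_cast
      ring
  have loss : ((n - k : ℕ) : ℝ) * shapleyWeight n k =
      if k = n then 0 else (k.factorial * (n - k).factorial : ℝ) / n.factorial := by
    split_ifs with h
    · simp [h]
    · have h' := Nat.mul_factorial_pred (n := n - k) (by omega)
      rw [shapleyWeight, ← h']
      push_cast
      ring
  rw [gain, loss]
  by_cases h0 : k = 0 <;> by_cases h1 : k = n
  · simp [h0, ← h1]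
  · subst h0
    simp [h1, div_self hn]
  · subst h1
    simp [h0, div_self hn]
  · simp [h0, h1]

/-- Efficiency: the Shapley values of a game `g` add up to `g univ - g ∅`. -/
lemma sum_shapley_eq {V : Type*} [Fintype V] [DecidableEq V] (g : Finset V → ℝ) :
    ∑ i : V, ∑ C ∈ (univ.erase i).powerset,
      shapleyWeight (Fintype.card V) C.card * (g (insert i C) - g C) = g univ - g ∅ := by
  have gain : ∑ i : V, ∑ C ∈ (univ.erase i).powerset,
      shapleyWeight (Fintype.card V) C.card * g (insert i C) =
      ∑ D : Finset V, (D.card : ℝ) * shapleyWeight (Fintype.card V) (D.card - 1) * g D := by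
    have reindex (i : V) : ∑ C ∈ (univ.erase i).powerset,
        shapleyWeight (Fintype.card V) C.card * g (insert i C) =
        ∑ D with i ∈ D, shapleyWeight (Fintype.card V) (D.card - 1) * g D := by
      refine sum_nbij' (insert i) (fun D => D.erase i) ?_ ?_ ?_ ?_ ?_
      · simp
      · intro D _
        simpa using erase_subset_erase i (subset_univ D)
      · intro C hC
        exact erase_insert (by simpa [subset_erase] using hC)
      · intro D hD
        exact insert_erase (by simpa using hD)
      · intro C hC
        rw [card_insert_of_notMem (by simpa [subset_erase] using hC), Nat.add_sub_cancel]
    rw [sum_congr rfl fun i _ => reindex i,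
      sum_comm' (t' := univ) (s' := fun D : Finset V => D) (by simp)]
    simp [mul_assoc]
  have loss : ∑ i : V, ∑ C ∈ (univ.erase i).powerset,
      shapleyWeight (Fintype.card V) C.card * g C =
      ∑ D : Finset V, ((Fintype.card V - D.card : ℕ) : ℝ) *
        shapleyWeight (Fintype.card V) D.card * g D := by
    rw [sum_comm' (t' := univ) (s' := fun D : Finset V => Dᶜ) (by simp [subset_erase])]
    simp only [sum_const, card_compl, nsmul_eq_mul, mul_assoc]
  simp only [mul_sub, sum_sub_distrib, gain, loss]
  rw [← sum_sub_distrib]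
  simp only [← sub_mul, mul_shapleyWeight_pred_sub _ _ (card_le_univ _), card_eq_iff_eq_univ,
    card_eq_zero]
  simp [sub_mul, sum_sub_distrib]

/-- Diminishing marginal contributions, comparing `C` with its trace on a set `X ∋ i`. -/
lemma marginal_le_marginal_inter {V : Type*} [DecidableEq V] {f : Finset V → ℝ}
    (hsub : ∀ X Y : Finset V, f (X ∩ Y) + f (X ∪ Y) ≤ f X + f Y)
    {X C : Finset V} {i : V} (hX : i ∈ X) (hC : i ∉ C) :
    f (insert i C) - f C ≤ f (insert i C ∩ X) - f (C ∩ X) := by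
  have h := hsub (insert i C ∩ X) C
  have hinter : insert i C ∩ X ∩ C = C ∩ X := by grind
  have hunion : insert i C ∩ X ∪ C = insert i C := by grind
  rw [hinter, hunion] at h
  linarith

/-- The Shapley value of a convex (normalized submodular cost) game lies in the core. -/
theorem shapley_in_core
    {V : Type*} [Fintype V] [DecidableEq V] [Nonempty V]
    (f : Finset V → ℝ)
    (hnorm : f ∅ = 0)
    (hsub : ∀ X Y : Finset V, f (X ∩ Y) + f (X ∪ Y) ≤ f X + f Y)
    (φ : V → ℝ)
    (hφ : ∀ i : V,
      φ i = ∑ C ∈ (Finset.univ.erase i).powerset,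
        ((C.card.factorial * (Fintype.card V - C.card - 1).factorial : ℝ) /
            (Fintype.card V).factorial) * (f (insert i C) - f C)) :
    (∀ X : Finset V, ∑ i ∈ X, φ i ≤ f X) ∧ ∑ i, φ i = f Finset.univ := by
  simp only [← shapleyWeight.eq_1] at hφ
  constructor
  · intro X
    calc ∑ i ∈ X, φ i
        ≤ ∑ i ∈ X, ∑ C ∈ (univ.erase i).powerset, shapleyWeight (Fintype.card V) C.card *
            (f (insert i C ∩ X) - f (C ∩ X)) := by
          refine sum_le_sum fun i hi => ?_
          rw [hφ]
          refine sum_le_sum fun C hC => ?_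
          exact mul_le_mul_of_nonneg_left
            (marginal_le_marginal_inter hsub hi (by simpa [subset_erase] using hC))
            (shapleyWeight_nonneg _ _)
      _ = ∑ i, ∑ C ∈ (univ.erase i).powerset, shapleyWeight (Fintype.card V) C.card *
            (f (insert i C ∩ X) - f (C ∩ X)) := by
          refine sum_subset (subset_univ X) fun i _ hi => sum_eq_zero fun C _ => ?_
          rw [insert_inter_of_notMem hi, sub_self, mul_zero]
      _ = f X := by
          rw [sum_shapley_eq fun C => f (C ∩ X)]
          simp [hnorm]
  · rw [sum_congr rfl fun i _ => hφ i, sum_shapley_eq, hnorm, sub_zero]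
end

section
/- Let V be a nonempty finite set and f : 2^V → ℝ a normalized monotone submodular set function. If P is a decomposer of the game (V, f) (a partition of V with f(V) = ∑_{C∈P} f(C)), then f decomposes additively across the blocks on every subset: f(X) = ∑_{C∈P} f(X ∩ C) for all X ⊆ V. -/
open Finset

/-- A normalized monotone submodular function is subadditive along the traces of a set `X`. -/
theorem submodular_inter_sup_le_sum {V : Type*} [DecidableEq V] (f : Finset V → ℝ)
    (hnorm : f ∅ = 0)
    (hmono : ∀ X Y : Finset V, Y ⊆ X → f Y ≤ f X)
    (hsub : ∀ X Y : Finset V, f (X ∩ Y) + f (X ∪ Y) ≤ f X + f Y)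
    (X : Finset V) (Q : Finset (Finset V)) :
    f (X ∩ Q.sup id) ≤ ∑ C ∈ Q, f (X ∩ C) := by
  induction Q using Finset.induction_on with
  | empty => simp [hnorm]
  | insert C Q hC ih =>
    rw [sum_insert hC, sup_insert, id, sup_eq_union, inter_union_distrib_left]
    have hunion := hsub (X ∩ C) (X ∩ Q.sup id)
    have hnonneg := hmono ((X ∩ C) ∩ (X ∩ Q.sup id)) ∅ (empty_subset _)
    linarith

/-- Adjoining the members of `Q` to `X` raises a monotone submodular function by at most the sum
of the marginals `f C - f (X ∩ C)`. -/
theorem submodular_union_sup_le_add_sum {V : Type*} [DecidableEq V] (f : Finset V → ℝ)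
    (hmono : ∀ X Y : Finset V, Y ⊆ X → f Y ≤ f X)
    (hsub : ∀ X Y : Finset V, f (X ∩ Y) + f (X ∪ Y) ≤ f X + f Y)
    (X : Finset V) (Q : Finset (Finset V)) :
    f (X ∪ Q.sup id) ≤ f X + ∑ C ∈ Q, (f C - f (X ∩ C)) := by
  induction Q using Finset.induction_on with
  | empty => simp
  | insert C Q hC ih =>
    rw [sum_insert hC, sup_insert, id, sup_eq_union, union_comm C, ← union_assoc]
    have hunion := hsub (X ∪ Q.sup id) C
    have htrace := hmono ((X ∪ Q.sup id) ∩ C) (X ∩ C)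
      (inter_subset_inter_right subset_union_left)
    linarith

/-- If `P` is a decomposer of the normalized monotone submodular game `(V, f)`,
then `f` decomposes additively across the blocks on every subset:
`f(X) = ∑_{C ∈ P} f(X ∩ C)` for all `X ⊆ V`. -/
theorem decomposer_additive
    {V : Type*} [Fintype V] [DecidableEq V] [Nonempty V]
    (f : Finset V → ℝ)
    (hnorm : f ∅ = 0)
    (hmono : ∀ X Y : Finset V, Y ⊆ X → f Y ≤ f X)
    (hsub : ∀ X Y : Finset V, f (X ∩ Y) + f (X ∪ Y) ≤ f X + f Y)
    (P : Finset (Finset V))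
    (hne : ∀ C ∈ P, C.Nonempty)
    (hdisj : ∀ C ∈ P, ∀ D ∈ P, C ≠ D → Disjoint C D)
    (hcover : P.sup id = Finset.univ)
    (hdec : f Finset.univ = ∑ C ∈ P, f C) :
    ∀ X : Finset V, f X = ∑ C ∈ P, f (X ∩ C) := by
  intro X
  have hle := submodular_inter_sup_le_sum f hnorm hmono hsub X P
  have hge := submodular_union_sup_le_add_sum f hmono hsub X P
  rw [hcover, inter_univ] at hle
  rw [hcover, union_eq_right.2 (subset_univ X), sum_sub_distrib, ← hdec] at hge
  linarith
end
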